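/- arXiv:2506.08720 — 2 statements merged into one kernel-verified Lean document; each statement's English description precedes it below -/
import Mathlib

section
/- Let M and Z be real m×n matrices with rank(M) ≤ r. Then the Frobenius inner product satisfies ⟨M, Z⟩ ≤ ‖M‖_F · ‖Π_r(Z)‖_F, where Π_r(Z) is the best rank-r approximation of Z. -/
/-!
Let `K` be the column space of `M` and `P` the orthogonal projection onto it. Since `P M = M`,
Cauchy-Schwarz gives `⟨M, Z⟩ = ⟨M, P Z⟩ ≤ ‖M‖ ‖P Z‖`. By orthonormality of the right singular
vectors, `‖P Z‖² = ∑ sᵢ² ‖P uᵢ‖²`. The weights `‖P uᵢ‖²` lie in `[0, 1]` and add up to at most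
`dim K = rank M ≤ r`, so the sum is largest when all the weight sits on the `r` largest singular
values, where it equals `‖Π_r(Z)‖²`.
-/

open Matrix Finset

attribute [local instance] Classical.propDecidable

/-- Frobenius norm of a real matrix. -/
noncomputable def frobNorm {m n : ℕ} (A : Matrix (Fin m) (Fin n) ℝ) : ℝ :=
  Real.sqrt (∑ i, ∑ j, (A i j) ^ 2)

/-- Frobenius inner product ⟨A,B⟩ = trace(AᵀB). -/
noncomputable def frobInner {m n : ℕ} (A B : Matrix (Fin m) (Fin n) ℝ) : ℝ :=
  ∑ i, ∑ j, A i j * B i j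

/-- Operator (spectral) norm of a real matrix w.r.t. Euclidean norms. -/
noncomputable def specNorm {m n : ℕ} (A : Matrix (Fin m) (Fin n) ℝ) : ℝ :=
  ⨆ x : {x : Fin n → ℝ // ∑ a, x a ^ 2 ≤ 1}, Real.sqrt (∑ a, (A.mulVec x.1) a ^ 2)

/-- A singular value decomposition of `M`: `M = ∑ i, s i • u i (v i)ᵀ` with
orthonormal `u`, `v` and nonincreasing nonnegative singular values `s`. -/
structure SVDOf {m n : ℕ} (M : Matrix (Fin m) (Fin n) ℝ) where
  s : Fin (min m n) → ℝ
  u : Fin (min m n) → Fin m → ℝ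
  v : Fin (min m n) → Fin n → ℝ
  s_nonneg : ∀ i, 0 ≤ s i
  s_anti : ∀ i j : Fin (min m n), i ≤ j → s j ≤ s i
  u_orth : ∀ i j, (∑ a, u i a * u j a) = if i = j then (1 : ℝ) else 0
  v_orth : ∀ i j, (∑ a, v i a * v j a) = if i = j then (1 : ℝ) else 0
  decomp : M = ∑ i, Matrix.of fun a b => s i * u i a * v i b

/-- Truncated SVD `Π_k(M)`: keep the `k` largest singular values. -/
noncomputable def SVDOf.trunc {m n : ℕ} {M : Matrix (Fin m) (Fin n) ℝ}
    (D : SVDOf M) (k : ℕ) : Matrix (Fin m) (Fin n) ℝ :=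
  ∑ i ∈ Finset.univ.filter (fun i : Fin (min m n) => (i : ℕ) < k),
    Matrix.of fun a b => D.s i * D.u i a * D.v i b

/-- Hard singular value thresholding `M(ξ)`: keep singular values `≥ ξ`. -/
noncomputable def SVDOf.thresh {m n : ℕ} {M : Matrix (Fin m) (Fin n) ℝ}
    (D : SVDOf M) (ξ : ℝ) : Matrix (Fin m) (Fin n) ℝ :=
  ∑ i ∈ Finset.univ.filter (fun i : Fin (min m n) => ξ ≤ D.s i),
    Matrix.of fun a b => D.s i * D.u i a * D.v i b

section WeightedSum

variable {R : Type*} [CommRing R] [LinearOrder R] [IsStrictOrderedRing R]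

lemma sum_mul_le_sum_of_threshold {ι : Type*} [Fintype ι] {t c : ι → R} {S : Finset ι} {τ : R}
    (hτ : 0 ≤ τ) (ht_mem : ∀ i ∈ S, τ ≤ t i) (ht_notMem : ∀ i ∉ S, t i ≤ τ)
    (hc_nonneg : ∀ i, 0 ≤ c i) (hc_le_one : ∀ i, c i ≤ 1) (hc_sum : ∑ i, c i ≤ #S) :
    ∑ i, t i * c i ≤ ∑ i ∈ S, t i := by
  -- After subtracting `τ` the comparison holds term by term.
  have excess_le (i : ι) : (t i - τ) * c i ≤ if i ∈ S then t i - τ else 0 := by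
    split_ifs with hi
    · exact mul_le_of_le_one_right (sub_nonneg.2 (ht_mem i hi)) (hc_le_one i)
    · exact mul_nonpos_of_nonpos_of_nonneg (sub_nonpos.2 (ht_notMem i hi)) (hc_nonneg i)
  calc ∑ i, t i * c i = ∑ i, (t i - τ) * c i + τ * ∑ i, c i := by
        rw [mul_sum, ← sum_add_distrib]
        exact sum_congr rfl fun i _ => by ring
    _ ≤ ∑ i ∈ S, (t i - τ) + τ * #S := by
        gcongr
        simpa only [sum_ite_mem, univ_inter] using sum_le_sum fun i (_ : i ∈ univ) => excess_le i
    _ = ∑ i ∈ S, t i := by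
        rw [sum_sub_distrib, sum_const, nsmul_eq_mul]
        ring

lemma sum_mul_le_sum_filter_lt_of_antitone {N r : ℕ} {t c : Fin N → R} (ht_anti : Antitone t)
    (ht_nonneg : ∀ i, 0 ≤ t i) (hc_nonneg : ∀ i, 0 ≤ c i) (hc_le_one : ∀ i, c i ≤ 1)
    (hc_sum : ∑ i, c i ≤ r) :
    ∑ i, t i * c i ≤ ∑ i with i.val < r, t i := by
  rcases lt_or_ge r N with hr | hr
  · refine sum_mul_le_sum_of_threshold (ht_nonneg ⟨r, hr⟩) (fun i hi => ht_anti ?_)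
      (fun i hi => ht_anti ?_) hc_nonneg hc_le_one ?_
    · exact (mem_filter.1 hi).2.le
    · exact not_lt.1 fun h => hi (mem_filter.2 ⟨mem_univ i, h⟩)
    · rwa [Fin.card_filter_val_lt, min_eq_right hr.le]
  · rw [filter_true_of_mem fun i _ => i.isLt.trans_le hr]
    exact sum_le_sum fun i _ => mul_le_of_le_one_right (ht_nonneg i) (hc_le_one i)

end WeightedSum

section InnerProductSpace

variable {𝕜 E ι κ : Type*} [RCLike 𝕜] [NormedAddCommGroup E] [InnerProductSpace 𝕜 E]

lemma norm_sum_inner_le_sqrt_mul_sqrt [Fintype κ] (x y : κ → E) :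
    ‖∑ j, inner 𝕜 (x j) (y j)‖ ≤ √(∑ j, ‖x j‖ ^ 2) * √(∑ j, ‖y j‖ ^ 2) := by
  simpa only [PiLp.inner_apply, PiLp.norm_eq_of_L2] using
    norm_inner_le_norm (𝕜 := 𝕜) (WithLp.toLp 2 x) (WithLp.toLp 2 y)

lemma norm_sum_inner_le_sqrt_mul_sqrt_starProjection [Fintype κ] (K : Submodule 𝕜 E)
    [K.HasOrthogonalProjection] {x : κ → E} (hx : ∀ j, x j ∈ K) (y : κ → E) :
    ‖∑ j, inner 𝕜 (x j) (y j)‖ ≤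
      √(∑ j, ‖x j‖ ^ 2) * √(∑ j, ‖K.starProjection (y j)‖ ^ 2) := by
  have inner_proj (j : κ) : inner 𝕜 (x j) (y j) = inner 𝕜 (x j) (K.starProjection (y j)) := by
    rw [← K.inner_starProjection_left_eq_right, K.starProjection_eq_self_iff.2 (hx j)]
  simpa only [inner_proj] using norm_sum_inner_le_sqrt_mul_sqrt x fun j => K.starProjection (y j)

lemma sum_norm_sq_sum_smul_of_orthonormal [Fintype κ] {v : ι → EuclideanSpace 𝕜 κ}
    (hv : Orthonormal 𝕜 v) (S : Finset ι) (x : ι → E) :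
    ∑ j, ‖∑ i ∈ S, v i j • x i‖ ^ 2 = ∑ i ∈ S, ‖x i‖ ^ 2 := by
  have sum_inner_eq : ∑ j, inner 𝕜 (∑ i ∈ S, v i j • x i) (∑ i ∈ S, v i j • x i) =
      ∑ i ∈ S, inner 𝕜 (x i) (x i) := by
    calc ∑ j, inner 𝕜 (∑ i ∈ S, v i j • x i) (∑ i ∈ S, v i j • x i)
        = ∑ j, ∑ i ∈ S, ∑ k ∈ S, inner 𝕜 (v i j) (v k j) * inner 𝕜 (x i) (x k) := by
          simp_rw [sum_inner, inner_sum, inner_smul_left, inner_smul_right, RCLike.inner_apply]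
          exact sum_congr rfl fun j _ => sum_congr rfl fun i _ => sum_congr rfl fun k _ => by ring
      _ = ∑ i ∈ S, ∑ k ∈ S, inner 𝕜 (v i) (v k) * inner 𝕜 (x i) (x k) := by
          simp only [PiLp.inner_apply, sum_mul]
          rw [sum_comm]
          exact sum_congr rfl fun i _ => sum_comm
      _ = ∑ i ∈ S, inner 𝕜 (x i) (x i) := by
          simp only [orthonormal_iff_ite.1 hv, ite_mul, one_mul, zero_mul, sum_ite_eq]
          exact sum_congr rfl fun i hi => if_pos hi
  simp only [inner_self_eq_norm_sq_to_K] at sum_inner_eq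
  exact_mod_cast sum_inner_eq

lemma sum_norm_sq_starProjection_le_finrank_of_orthonormal [Fintype ι] {u : ι → E}
    (hu : Orthonormal 𝕜 u) (K : Submodule 𝕜 E) [FiniteDimensional 𝕜 K] :
    ∑ i, ‖K.starProjection (u i)‖ ^ 2 ≤ Module.finrank 𝕜 K := by
  let b := stdOrthonormalBasis 𝕜 K
  have norm_sq_proj (x : E) : ‖K.starProjection x‖ ^ 2 = ∑ l, ‖inner 𝕜 (b l : E) x‖ ^ 2 := by
    rw [K.starProjection_apply, K.norm_coe, ← b.sum_sq_norm_inner_right]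
    simp only [K.inner_orthogonalProjectionOnto_eq_of_mem_left]
  calc ∑ i, ‖K.starProjection (u i)‖ ^ 2
      = ∑ l, ∑ i, ‖inner 𝕜 (u i) (b l : E)‖ ^ 2 := by
        simp only [norm_sq_proj, norm_inner_symm (b _ : E)]
        exact sum_comm
    _ ≤ ∑ l, ‖(b l : E)‖ ^ 2 := sum_le_sum fun l _ => hu.sum_inner_products_le (b l : E)
    _ = Module.finrank 𝕜 K := by simp [K.norm_coe, b.norm_eq_one]

end InnerProductSpace

section EuclideanColumn

variable {𝕜 ι κ : Type*} [RCLike 𝕜]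

/-- The columns of a matrix as vectors of Euclidean space, so that the Frobenius geometry of
matrices becomes the Euclidean geometry of their families of columns. -/
noncomputable def euclideanCol (A : Matrix ι κ 𝕜) (j : κ) : EuclideanSpace 𝕜 ι :=
  WithLp.toLp 2 (A.col j)

lemma finrank_span_range_euclideanCol [Fintype κ] (A : Matrix ι κ 𝕜) :
    Module.finrank 𝕜 (Submodule.span 𝕜 (Set.range (euclideanCol A))) = A.rank := by
  let e : (ι → 𝕜) ≃ₗ[𝕜] EuclideanSpace 𝕜 ι := (WithLp.linearEquiv 2 𝕜 (ι → 𝕜)).symm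
  have range_eq : Set.range (euclideanCol A) = e '' Set.range A.col :=
    Set.range_comp e A.col
  rw [range_eq, ← LinearEquiv.coe_coe, Submodule.span_image, LinearEquiv.finrank_map_eq,
    A.rank_eq_finrank_span_cols]

lemma euclideanCol_sum_of_mul_mul {μ : Type*} (S : Finset μ) (s : μ → 𝕜) (u : μ → ι → 𝕜)
    (v : μ → κ → 𝕜) (j : κ) :
    euclideanCol (∑ i ∈ S, Matrix.of fun a b => s i * u i a * v i b) j =
      ∑ i ∈ S, v i j • s i • WithLp.toLp 2 (u i) := by
  ext a
  simp only [euclideanCol, Matrix.col_apply, Matrix.sum_apply, Matrix.of_apply, WithLp.ofLp_sum,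
    Finset.sum_apply, PiLp.smul_apply, smul_eq_mul]
  exact sum_congr rfl fun i _ => by ring

lemma frobInner_eq_sum_inner_euclideanCol {m n : ℕ} (A B : Matrix (Fin m) (Fin n) ℝ) :
    frobInner A B = ∑ j, inner ℝ (euclideanCol A j) (euclideanCol B j) := by
  rw [frobInner, sum_comm]
  simp [euclideanCol, PiLp.inner_apply, mul_comm]

lemma frobNorm_eq_sqrt_sum_norm_sq_euclideanCol {m n : ℕ} (A : Matrix (Fin m) (Fin n) ℝ) :
    frobNorm A = √(∑ j, ‖euclideanCol A j‖ ^ 2) := by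
  rw [frobNorm, sum_comm]
  simp [euclideanCol, EuclideanSpace.real_norm_sq_eq]

lemma orthonormal_toLp_of_sum_mul_eq_ite [DecidableEq ι] [Fintype κ] {w : ι → κ → ℝ}
    (hw : ∀ i j, ∑ a, w i a * w j a = if i = j then 1 else 0) :
    Orthonormal ℝ fun i => WithLp.toLp 2 (w i) := by
  rw [orthonormal_iff_ite]
  intro i j
  rw [← hw i j]
  simp [PiLp.inner_apply, mul_comm]

end EuclideanColumn

namespace SVDOf

variable {m n : ℕ} {Z : Matrix (Fin m) (Fin n) ℝ} (D : SVDOf Z)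

lemma orthonormal_u : Orthonormal ℝ fun i => WithLp.toLp 2 (D.u i) :=
  orthonormal_toLp_of_sum_mul_eq_ite D.u_orth

lemma orthonormal_v : Orthonormal ℝ fun i => WithLp.toLp 2 (D.v i) :=
  orthonormal_toLp_of_sum_mul_eq_ite D.v_orth

lemma euclideanCol_eq_sum (j : Fin n) :
    euclideanCol Z j = ∑ i, D.v i j • D.s i • WithLp.toLp 2 (D.u i) := by
  rw [← euclideanCol_sum_of_mul_mul, ← D.decomp]

lemma sum_norm_sq_map_euclideanCol {E : Type*} [NormedAddCommGroup E] [InnerProductSpace ℝ E]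
    (T : EuclideanSpace ℝ (Fin m) →ₗ[ℝ] E) :
    ∑ j, ‖T (euclideanCol Z j)‖ ^ 2 = ∑ i, D.s i ^ 2 * ‖T (WithLp.toLp 2 (D.u i))‖ ^ 2 := by
  simp only [D.euclideanCol_eq_sum, map_sum, map_smul]
  rw [sum_norm_sq_sum_smul_of_orthonormal D.orthonormal_v]
  simp only [norm_smul, mul_pow, Real.norm_eq_abs, sq_abs]

lemma frobNorm_trunc (r : ℕ) : frobNorm (D.trunc r) = √(∑ i with i.val < r, D.s i ^ 2) := by
  simp only [frobNorm_eq_sqrt_sum_norm_sq_euclideanCol, trunc, euclideanCol_sum_of_mul_mul]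
  rw [sum_norm_sq_sum_smul_of_orthonormal D.orthonormal_v]
  simp only [norm_smul, D.orthonormal_u.norm_eq_one, mul_one, Real.norm_eq_abs, sq_abs]

lemma sqrt_sum_norm_sq_starProjection_le_frobNorm_trunc
    {K : Submodule ℝ (EuclideanSpace ℝ (Fin m))} {r : ℕ} (hK : Module.finrank ℝ K ≤ r) :
    √(∑ j, ‖K.starProjection (euclideanCol Z j)‖ ^ 2) ≤ frobNorm (D.trunc r) := by
  have sq_antitone : Antitone fun i => D.s i ^ 2 := fun i j hij =>
    pow_le_pow_left₀ (D.s_nonneg j) (D.s_anti i j hij) 2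
  have weight_le_one (i : Fin (min m n)) :
      ‖K.starProjection (WithLp.toLp 2 (D.u i))‖ ^ 2 ≤ 1 :=
    pow_le_one₀ (norm_nonneg _)
      ((K.norm_starProjection_apply_le _).trans_eq (D.orthonormal_u.norm_eq_one i))
  have weight_sum_le : ∑ i, ‖K.starProjection (WithLp.toLp 2 (D.u i))‖ ^ 2 ≤ r :=
    (sum_norm_sq_starProjection_le_finrank_of_orthonormal D.orthonormal_u K).trans
      (Nat.cast_le.2 hK)
  rw [D.frobNorm_trunc]
  refine Real.sqrt_le_sqrt ?_
  calc ∑ j, ‖K.starProjection (euclideanCol Z j)‖ ^ 2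
      = ∑ i, D.s i ^ 2 * ‖K.starProjection (WithLp.toLp 2 (D.u i))‖ ^ 2 :=
        D.sum_norm_sq_map_euclideanCol K.starProjection.toLinearMap
    _ ≤ ∑ i with i.val < r, D.s i ^ 2 :=
        sum_mul_le_sum_filter_lt_of_antitone sq_antitone (fun i => sq_nonneg _)
          (fun i => sq_nonneg _) weight_le_one weight_sum_le

end SVDOf

/-- If `rank M ≤ r` then `⟨M, Z⟩ ≤ ‖M‖_F ‖Π_r(Z)‖_F`. -/
theorem stmt1 {m n : ℕ} (M Z : Matrix (Fin m) (Fin n) ℝ) (r : ℕ)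
    (hM : M.rank ≤ r) (DZ : SVDOf Z) :
    frobInner M Z ≤ frobNorm M * frobNorm (DZ.trunc r) := by
  let K := Submodule.span ℝ (Set.range (euclideanCol M))
  have col_mem (j : Fin n) : euclideanCol M j ∈ K := Submodule.subset_span ⟨j, rfl⟩
  have finrank_K : Module.finrank ℝ K ≤ r := (finrank_span_range_euclideanCol M).trans_le hM
  calc frobInner M Z = ∑ j, inner ℝ (euclideanCol M j) (euclideanCol Z j) :=
        frobInner_eq_sum_inner_euclideanCol M Z
    _ ≤ √(∑ j, ‖euclideanCol M j‖ ^ 2) *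
          √(∑ j, ‖K.starProjection (euclideanCol Z j)‖ ^ 2) :=
        (Real.le_norm_self _).trans
          (norm_sum_inner_le_sqrt_mul_sqrt_starProjection K col_mem (euclideanCol Z))
    _ ≤ frobNorm M * frobNorm (DZ.trunc r) := by
        rw [← frobNorm_eq_sqrt_sum_norm_sq_euclideanCol]
        exact mul_le_mul_of_nonneg_left
          (DZ.sqrt_sum_norm_sq_starProjection_le_frobNorm_trunc finrank_K) (Real.sqrt_nonneg _)
end

section
/- Let H, Z be real m×n matrices with rank(H) = n₀, set Ĥ = H + Z, and let ξ ≥ 2‖Z‖₂. Let Ĥ(ξ) denote the matrix obtained from Ĥ by keeping only the singular subspaces with singular values at least ξ. Then ‖Ĥ(ξ) − H‖_F² ≤ 18 · min_{k=0,…,n₀} ( 4kξ² + Σ_{i=k+1}^{n₀} s_i(H)² ). -/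
open Matrix Finset

attribute [local instance] Classical.propDecidable

/-!
Let `P` be the orthogonal projection onto the right singular vectors of `Ĥ = H + Z` whose singular
values are at least `ξ`. Then `Ĥ(ξ) = Ĥ P`, and the error splits orthogonally as
`Ĥ(ξ) - H = Z P - H (1 - P)`.

By Weyl's inequality, each direction kept by `P` has `s i (H) ≥ ξ / 2`; hence for any index set `S`
the rank of `P` is at most `#S + (2 / ξ)² ∑_{i ∉ S} s i (H)²`, which controls `‖Z P‖_F`. In the
other part, `‖H (1 - P)‖₂ ≤ ‖Ĥ (1 - P)‖₂ + ‖Z‖₂ ≤ 3 ξ / 2`. Written in the left singular basis of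
`H`, row `i` of `H (1 - P)` has norm at most `min (3 ξ / 2) (s i (H))`: the first bound is used for
`i ∈ S`, the second for `i ∉ S`.
-/

section L2OpNorm

open scoped Matrix.Norms.L2Operator

variable {ι κ m n : Type*} [Fintype ι] [Fintype κ] [Fintype m] [Fintype n]

theorem l2_opNorm_transpose [DecidableEq ι] [DecidableEq κ] (A : Matrix ι κ ℝ) : ‖Aᵀ‖ = ‖A‖ := by
  rw [← conjTranspose_eq_transpose_of_trivial, l2_opNorm_conjTranspose]

theorem l2_opNorm_le_one_of_mul_transpose_eq_one [DecidableEq ι] [DecidableEq κ]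
    {U : Matrix ι κ ℝ} (hU : U * Uᵀ = 1) : ‖U‖ ≤ 1 := by
  have h_sq : ‖U‖ * ‖U‖ = ‖(1 : Matrix ι ι ℝ)‖ := by
    rw [← l2_opNorm_transpose U, ← l2_opNorm_conjTranspose_mul_self,
      conjTranspose_eq_transpose_of_trivial, transpose_transpose, hU]
  have h_one : ‖(1 : Matrix ι ι ℝ)‖ ≤ 1 := IsStarProjection.norm_le _ (.one _)
  exact (sq_le_one_iff₀ (norm_nonneg U)).mp ((pow_two _).trans_le (h_sq.trans_le h_one))

theorem l2_opNorm_mul_le_of_le_one [DecidableEq κ] [DecidableEq m] {A : Matrix ι κ ℝ}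
    (hA : ‖A‖ ≤ 1) (B : Matrix κ m ℝ) : ‖A * B‖ ≤ ‖B‖ :=
  (l2_opNorm_mul A B).trans (mul_le_of_le_one_left (norm_nonneg B) hA)

theorem l2_opNorm_mul_mul_le_of_le_one [DecidableEq κ] [DecidableEq m] [DecidableEq n]
    {A : Matrix ι κ ℝ} {C : Matrix m n ℝ} (hA : ‖A‖ ≤ 1) (hC : ‖C‖ ≤ 1) (B : Matrix κ m ℝ) :
    ‖A * B * C‖ ≤ ‖B‖ :=
  calc ‖A * B * C‖ ≤ ‖A‖ * ‖B‖ * ‖C‖ := by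
        grw [l2_opNorm_mul, l2_opNorm_mul]
    _ ≤ 1 * ‖B‖ * 1 := by gcongr
    _ = ‖B‖ := by ring

theorem l2_opNorm_mul_one_sub_le_of_isStarProjection [DecidableEq κ] {P : Matrix κ κ ℝ}
    (hP : IsStarProjection P) (A B : Matrix ι κ ℝ) :
    ‖A * (1 - P)‖ ≤ ‖B * (1 - P)‖ + ‖B - A‖ :=
  calc ‖A * (1 - P)‖ = ‖B * (1 - P) - (B - A) * (1 - P)‖ := by
        rw [← Matrix.sub_mul, sub_sub_cancel]
    _ ≤ ‖B * (1 - P)‖ + ‖B - A‖ * ‖1 - P‖ := by grw [norm_sub_le, l2_opNorm_mul (B - A)]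
    _ ≤ ‖B * (1 - P)‖ + ‖B - A‖ * 1 := by
        gcongr
        exact IsStarProjection.norm_le _ hP.one_sub
    _ = ‖B * (1 - P)‖ + ‖B - A‖ := by rw [mul_one]

theorem sum_row_sq_le_l2_opNorm_sq [DecidableEq κ] (A : Matrix ι κ ℝ) (i : ι) :
    ∑ j, A i j ^ 2 ≤ ‖A‖ ^ 2 := by
  have h := l2_opNorm_mulVec Aᵀ (EuclideanSpace.single i (1 : ℝ))
  rw [l2_opNorm_transpose, PiLp.norm_single, norm_one, mul_one] at h
  calc ∑ j, A i j ^ 2 = ‖WithLp.toLp 2 (Aᵀ *ᵥ Pi.single i (1 : ℝ))‖ ^ 2 := by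
        simp [EuclideanSpace.real_norm_sq_eq]
    _ ≤ ‖A‖ ^ 2 := pow_le_pow_left₀ (norm_nonneg _) h 2

theorem mul_norm_le_norm_diagonal_mulVec [DecidableEq ι] {c : ℝ} (hc : 0 ≤ c) {d a : ι → ℝ}
    (hd : ∀ i, a i ≠ 0 → c ≤ d i) :
    c * ‖WithLp.toLp 2 a‖ ≤ ‖WithLp.toLp 2 (diagonal d *ᵥ a)‖ := by
  refine abs_le_of_sq_le_sq' ?_ (norm_nonneg _) |>.2
  simp only [mul_pow, EuclideanSpace.real_norm_sq_eq, mulVec_diagonal, Finset.mul_sum]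
  refine sum_le_sum fun i _ => ?_
  rcases eq_or_ne (a i) 0 with h_zero | h_ne
  · simp [h_zero]
  · gcongr
    exact hd i h_ne

end L2OpNorm

-- Replacing row `i` of `W` by zero and each row `j > i` by the corresponding row of the identity
-- produces a singular matrix.
theorem exists_mulVec_eq_zero_of_lt {ι : Type*} [Fintype ι] [LinearOrder ι]
    (W : Matrix ι ι ℝ) (i : ι) :
    ∃ a ≠ 0, (∀ j, i < j → a j = 0) ∧ ∀ j, j < i → (W *ᵥ a) j = 0 := by
  let R : Matrix ι ι ℝ := of fun j => if j < i then W j else if i < j then Pi.single j 1 else 0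
  have hR : R.det = 0 := det_eq_zero_of_row_eq_zero i fun j => by simp [R]
  obtain ⟨a, ha, hRa⟩ := exists_mulVec_eq_zero_iff.mpr hR
  refine ⟨a, ha, fun j hj => ?_, fun j hj => ?_⟩
  · simpa [R, mulVec, hj, hj.not_gt] using congrFun hRa j
  · simpa [R, mulVec, hj] using congrFun hRa j

section Frobenius

open scoped Matrix.Norms.L2Operator

variable {m n p : ℕ}

theorem frobNorm_sq (A : Matrix (Fin m) (Fin n) ℝ) : frobNorm A ^ 2 = ∑ i, ∑ j, A i j ^ 2 :=
  Real.sq_sqrt (by positivity)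

theorem frobNorm_sq_eq_trace (A : Matrix (Fin m) (Fin n) ℝ) :
    frobNorm A ^ 2 = (A * Aᵀ).trace := by
  rw [frobNorm_sq]
  simp [trace, mul_apply, pow_two]

theorem frobNorm_transpose (A : Matrix (Fin m) (Fin n) ℝ) : frobNorm Aᵀ = frobNorm A := by
  simp only [frobNorm, transpose_apply]
  rw [Finset.sum_comm]

theorem frobNorm_sub_sq_of_mul_transpose_eq_zero {A B : Matrix (Fin m) (Fin n) ℝ}
    (h : A * Bᵀ = 0) : frobNorm (A - B) ^ 2 = frobNorm A ^ 2 + frobNorm B ^ 2 := by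
  have h' : B * Aᵀ = 0 := by simpa using congrArg transpose h
  simp [frobNorm_sq_eq_trace, Matrix.sub_mul, Matrix.mul_sub, h, h']

theorem frobNorm_mul_sub_sq_of_isStarProjection {P : Matrix (Fin n) (Fin n) ℝ}
    (hP : IsStarProjection P) (A B : Matrix (Fin m) (Fin n) ℝ) :
    frobNorm (B * P - A) ^ 2 = frobNorm ((B - A) * P) ^ 2 + frobNorm (A * (1 - P)) ^ 2 := by
  have h_compl : (1 - P)ᵀ = 1 - P := by
    rw [← conjTranspose_eq_transpose_of_trivial, ← star_eq_conjTranspose,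
      hP.one_sub.isSelfAdjoint.star_eq]
  have h_orth : (B - A) * P * (A * (1 - P))ᵀ = 0 := by
    rw [transpose_mul, h_compl, Matrix.mul_assoc, ← Matrix.mul_assoc P, hP.mul_one_sub_self,
      Matrix.zero_mul, Matrix.mul_zero]
  rw [← frobNorm_sub_sq_of_mul_transpose_eq_zero h_orth, Matrix.sub_mul, Matrix.mul_sub,
    Matrix.mul_one]
  congr 2
  abel

theorem frobNorm_transpose_mul_sq {U : Matrix (Fin p) (Fin m) ℝ} (hU : U * Uᵀ = 1)
    (A : Matrix (Fin p) (Fin n) ℝ) : frobNorm (Uᵀ * A) ^ 2 = frobNorm A ^ 2 := by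
  rw [frobNorm_sq_eq_trace, frobNorm_sq_eq_trace, transpose_mul, transpose_transpose,
    Matrix.mul_assoc, trace_mul_comm, Matrix.mul_assoc, Matrix.mul_assoc, hU, Matrix.mul_one]

theorem frobNorm_diagonal_mul_sq_le (d : Fin p → ℝ) (A : Matrix (Fin p) (Fin n) ℝ)
    (S : Finset (Fin p)) :
    frobNorm (diagonal d * A) ^ 2 ≤
      #S * ‖diagonal d * A‖ ^ 2 + (∑ i ∈ Sᶜ, d i ^ 2) * ‖A‖ ^ 2 := by
  rw [frobNorm_sq, ← sum_add_sum_compl S, ← nsmul_eq_mul, Finset.sum_mul]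
  refine add_le_add (sum_le_card_nsmul _ _ _ fun i _ => sum_row_sq_le_l2_opNorm_sq _ i)
    (sum_le_sum fun i _ => ?_)
  simp only [diagonal_mul, mul_pow, ← Finset.mul_sum]
  gcongr
  exact sum_row_sq_le_l2_opNorm_sq A i

theorem specNorm_eq_l2_opNorm (A : Matrix (Fin m) (Fin n) ℝ) : specNorm A = ‖A‖ := by
  rw [l2_opNorm_def, ← ContinuousLinearMap.sSup_unitClosedBall_eq_norm, sSup_image']
  have h_ball (x : Fin n → ℝ) :
      WithLp.toLp 2 x ∈ Metric.closedBall 0 1 ↔ ∑ a, x a ^ 2 ≤ 1 := by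
    rw [mem_closedBall_zero_iff, ← sq_le_one_iff₀ (norm_nonneg _),
      EuclideanSpace.real_norm_sq_eq]
  refine Equiv.iSup_congr
    ((WithLp.equiv 2 (Fin n → ℝ)).symm.subtypeEquiv fun x => (h_ball x).symm) fun x => ?_
  simp only [EuclideanSpace.norm_eq, Real.norm_eq_abs, sq_abs]
  rfl

end Frobenius

namespace SVDOf

open scoped Matrix.Norms.L2Operator

variable {m n : ℕ} {A B : Matrix (Fin m) (Fin n) ℝ}

/-- The matrix whose *rows* are the left singular vectors, so that the decomposition reads
`A = Uᵀ * diagonal s * V`. -/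
def U (D : SVDOf A) : Matrix (Fin (min m n)) (Fin m) ℝ := of D.u

/-- The matrix whose *rows* are the right singular vectors, so that the decomposition reads
`A = Uᵀ * diagonal s * V`. -/
def V (D : SVDOf A) : Matrix (Fin (min m n)) (Fin n) ℝ := of D.v

/-- The orthogonal projection of `ℝⁿ` onto the span of the right singular vectors with index
in `S`. -/
noncomputable def rightProj (D : SVDOf A) (S : Finset (Fin (min m n))) :
    Matrix (Fin n) (Fin n) ℝ :=
  D.Vᵀ * diagonal (fun i => if i ∈ S then (1 : ℝ) else 0) * D.V

variable (D : SVDOf A)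

theorem U_mul_transpose : D.U * D.Uᵀ = 1 := by
  ext i j
  simp [U, mul_apply, one_apply, D.u_orth]

theorem V_mul_transpose : D.V * D.Vᵀ = 1 := by
  ext i j
  simp [V, mul_apply, one_apply, D.v_orth]

theorem sum_eq_transpose_mul_diagonal_mul (S : Finset (Fin (min m n))) :
    ∑ i ∈ S, of (fun a b => D.s i * D.u i a * D.v i b) =
      D.Uᵀ * diagonal (fun i => if i ∈ S then D.s i else 0) * D.V := by
  ext a b
  rw [mul_apply]
  simp [Matrix.sum_apply, mul_diagonal, U, V, mul_comm (D.s _)]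

theorem eq_transpose_mul_diagonal_mul : A = D.Uᵀ * diagonal D.s * D.V := by
  simpa using D.decomp.trans (D.sum_eq_transpose_mul_diagonal_mul univ)

theorem V_mul_transpose_mul {q : ℕ} (C : Matrix (Fin (min m n)) (Fin q) ℝ) :
    D.V * (D.Vᵀ * C) = C := by
  rw [← Matrix.mul_assoc, D.V_mul_transpose, Matrix.one_mul]

theorem mul_eq_transpose_mul_diagonal_mul {q : ℕ} (C : Matrix (Fin n) (Fin q) ℝ) :
    A * C = D.Uᵀ * (diagonal D.s * (D.V * C)) := by
  simpa only [Matrix.mul_assoc] using congrArg (· * C) D.eq_transpose_mul_diagonal_mul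

theorem U_mul_mul {q : ℕ} (C : Matrix (Fin n) (Fin q) ℝ) :
    D.U * (A * C) = diagonal D.s * (D.V * C) := by
  rw [D.mul_eq_transpose_mul_diagonal_mul, ← Matrix.mul_assoc, D.U_mul_transpose, Matrix.one_mul]

theorem U_mul_mul_V_transpose : D.U * A * D.Vᵀ = diagonal D.s := by
  rw [Matrix.mul_assoc, D.U_mul_mul, D.V_mul_transpose, Matrix.mul_one]

theorem norm_U_le_one : ‖D.U‖ ≤ 1 := l2_opNorm_le_one_of_mul_transpose_eq_one D.U_mul_transpose

theorem norm_V_le_one : ‖D.V‖ ≤ 1 := l2_opNorm_le_one_of_mul_transpose_eq_one D.V_mul_transpose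

theorem s_eq_zero_of_rank_le {i : Fin (min m n)} (hi : A.rank ≤ i) : D.s i = 0 := by
  by_contra h_ne
  have h_pos : 0 < D.s i := (D.s_nonneg i).lt_of_ne' h_ne
  have h_rank : (diagonal D.s).rank ≤ A.rank := by
    rw [← D.U_mul_mul_V_transpose]
    exact (rank_mul_le_left _ _).trans (rank_mul_le_right _ _)
  have h_card : #(Iic i) ≤ (diagonal D.s).rank := by
    rw [rank_diagonal, Fintype.card_subtype]
    refine card_le_card fun j hj => mem_filter.mpr ⟨mem_univ j, ?_⟩
    exact (h_pos.trans_le (D.s_anti j i (mem_Iic.mp hj))).ne'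
  rw [Fin.card_Iic] at h_card
  omega

theorem isStarProjection_rightProj (S : Finset (Fin (min m n))) :
    IsStarProjection (D.rightProj S) where
  isIdempotentElem := by
    simp only [IsIdempotentElem, rightProj, Matrix.mul_assoc, V_mul_transpose_mul]
    rw [← Matrix.mul_assoc (diagonal _), diagonal_mul_diagonal]
    simp [← ite_and]
  isSelfAdjoint := by
    simp [IsSelfAdjoint, star_eq_conjTranspose, rightProj, Matrix.mul_assoc]

theorem rightProj_mulVec_eq_zero {S : Finset (Fin (min m n))} {x : Fin n → ℝ}
    (hx : ∀ i ∈ S, (D.V *ᵥ x) i = 0) : D.rightProj S *ᵥ x = 0 := by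
  have h_diag : diagonal (fun i => if i ∈ S then (1 : ℝ) else 0) *ᵥ (D.V *ᵥ x) = 0 := by
    ext i
    by_cases hi : i ∈ S <;> simp [mulVec_diagonal, hi, hx]
  rw [rightProj, ← mulVec_mulVec, ← mulVec_mulVec, h_diag, mulVec_zero]

theorem mul_rightProj (S : Finset (Fin (min m n))) :
    A * D.rightProj S = ∑ i ∈ S, of (fun a b => D.s i * D.u i a * D.v i b) := by
  rw [D.mul_eq_transpose_mul_diagonal_mul, sum_eq_transpose_mul_diagonal_mul, rightProj]
  simp only [Matrix.mul_assoc, V_mul_transpose_mul]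
  rw [← Matrix.mul_assoc (diagonal _), diagonal_mul_diagonal]
  simp

theorem norm_mul_one_sub_rightProj_le {S : Finset (Fin (min m n))} {c : ℝ} (hc : 0 ≤ c)
    (hS : ∀ i ∉ S, D.s i ≤ c) : ‖A * (1 - D.rightProj S)‖ ≤ c := by
  have h_eq : A * (1 - D.rightProj S) =
      D.Uᵀ * diagonal (fun i => if i ∈ S then 0 else D.s i) * D.V := by
    rw [Matrix.mul_sub, D.mul_rightProj, sum_eq_transpose_mul_diagonal_mul,
      D.mul_eq_transpose_mul_diagonal_mul, Matrix.mul_one, ← Matrix.mul_assoc, ← Matrix.sub_mul,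
      ← Matrix.mul_sub, diagonal_sub]
    congr! 4 with i
    split_ifs <;> simp
  rw [h_eq]
  refine (l2_opNorm_mul_mul_le_of_le_one ((l2_opNorm_transpose _).trans_le D.norm_U_le_one)
    D.norm_V_le_one _).trans ?_
  rw [l2_opNorm_diagonal, pi_norm_le_iff_of_nonneg hc]
  intro i
  split_ifs with hi
  · simpa using hc
  · simpa [abs_of_nonneg (D.s_nonneg i)] using hS i hi

theorem s_le_s_add_norm_sub (D' : SVDOf B) (i : Fin (min m n)) :
    D'.s i ≤ D.s i + ‖B - A‖ := by
  obtain ⟨a, ha, h_gt, h_lt⟩ := exists_mulVec_eq_zero_of_lt (D.V * D'.Vᵀ) i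
  set P := D.rightProj (Iio i)
  have hP : P *ᵥ (D'.Vᵀ *ᵥ a) = 0 :=
    D.rightProj_mulVec_eq_zero fun j hj => by rw [mulVec_mulVec, h_lt j (mem_Iio.mp hj)]
  have h_diag : diagonal D'.s *ᵥ a = (D'.U * (A * (1 - P) + (B - A)) * D'.Vᵀ) *ᵥ a := by
    rw [← D'.U_mul_mul_V_transpose]
    simp only [← mulVec_mulVec, add_mulVec, sub_mulVec, one_mulVec, hP, sub_zero,
      add_sub_cancel]
  have h_norm : ‖D'.U * (A * (1 - P) + (B - A)) * D'.Vᵀ‖ ≤ D.s i + ‖B - A‖ :=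
    calc ‖D'.U * (A * (1 - P) + (B - A)) * D'.Vᵀ‖ ≤ ‖A * (1 - P) + (B - A)‖ :=
          l2_opNorm_mul_mul_le_of_le_one D'.norm_U_le_one
            ((l2_opNorm_transpose _).trans_le D'.norm_V_le_one) _
      _ ≤ ‖A * (1 - P)‖ + ‖B - A‖ := norm_add_le _ _
      _ ≤ D.s i + ‖B - A‖ := by
          gcongr
          exact D.norm_mul_one_sub_rightProj_le (D.s_nonneg i) fun j hj =>
            D.s_anti i j (by simpa using hj)
  have h_upper : ‖WithLp.toLp 2 (diagonal D'.s *ᵥ a)‖ ≤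
      (D.s i + ‖B - A‖) * ‖WithLp.toLp 2 a‖ := by
    rw [h_diag]
    exact (l2_opNorm_mulVec _ (WithLp.toLp 2 a)).trans (by gcongr)
  have h_lower : D'.s i * ‖WithLp.toLp 2 a‖ ≤ ‖WithLp.toLp 2 (diagonal D'.s *ᵥ a)‖ := by
    refine mul_norm_le_norm_diagonal_mulVec (D'.s_nonneg i) fun j hj => D'.s_anti j i ?_
    exact not_lt.mp fun hij => hj (h_gt j hij)
  have h_pos : 0 < ‖WithLp.toLp 2 a‖ := norm_pos_iff.mpr (by simpa using ha)
  exact le_of_mul_le_mul_right (h_lower.trans h_upper) h_pos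

theorem frobNorm_mul_sq_le {q : ℕ} (C : Matrix (Fin n) (Fin q) ℝ) (S : Finset (Fin (min m n))) :
    frobNorm (A * C) ^ 2 ≤ #S * ‖A * C‖ ^ 2 + (∑ i ∈ Sᶜ, D.s i ^ 2) * ‖C‖ ^ 2 := by
  have hUAC : ‖diagonal D.s * (D.V * C)‖ ≤ ‖A * C‖ := by
    rw [← D.U_mul_mul]
    exact l2_opNorm_mul_le_of_le_one D.norm_U_le_one _
  have hVC : ‖D.V * C‖ ≤ ‖C‖ := l2_opNorm_mul_le_of_le_one D.norm_V_le_one C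
  calc frobNorm (A * C) ^ 2 = frobNorm (diagonal D.s * (D.V * C)) ^ 2 := by
        rw [D.mul_eq_transpose_mul_diagonal_mul, frobNorm_transpose_mul_sq D.U_mul_transpose]
    _ ≤ #S * ‖diagonal D.s * (D.V * C)‖ ^ 2 + (∑ i ∈ Sᶜ, D.s i ^ 2) * ‖D.V * C‖ ^ 2 :=
        frobNorm_diagonal_mul_sq_le _ _ S
    _ ≤ #S * ‖A * C‖ ^ 2 + (∑ i ∈ Sᶜ, D.s i ^ 2) * ‖C‖ ^ 2 := by gcongr

theorem frobNorm_mul_rightProj_sq_le {q : ℕ} (Z : Matrix (Fin q) (Fin n) ℝ)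
    (S : Finset (Fin (min m n))) : frobNorm (Z * D.rightProj S) ^ 2 ≤ #S * ‖Z‖ ^ 2 := by
  set e : Fin (min m n) → ℝ := fun i => if i ∈ S then 1 else 0
  have hVZ : ‖D.V * Zᵀ‖ ≤ ‖Z‖ := by
    rw [← l2_opNorm_transpose Z]
    exact l2_opNorm_mul_le_of_le_one D.norm_V_le_one _
  calc frobNorm (Z * D.rightProj S) ^ 2
      = frobNorm (D.Vᵀ * (diagonal e * (D.V * Zᵀ))) ^ 2 := by
        rw [← frobNorm_transpose]
        simp [rightProj, Matrix.mul_assoc, e]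
    _ = frobNorm (diagonal e * (D.V * Zᵀ)) ^ 2 := frobNorm_transpose_mul_sq D.V_mul_transpose _
    _ ≤ #S * ‖D.V * Zᵀ‖ ^ 2 := by
        simpa [e] using frobNorm_diagonal_mul_sq_le e (D.V * Zᵀ) ∅
    _ ≤ #S * ‖Z‖ ^ 2 := by gcongr

theorem thresh_eq_mul_rightProj (ξ : ℝ) :
    D.thresh ξ = A * D.rightProj {i | ξ ≤ D.s i} :=
  (D.mul_rightProj _).symm

theorem card_le_s_mul_sq_le (D' : SVDOf B) {ξ : ℝ} (hξ : 2 * ‖B - A‖ ≤ ξ)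
    (S : Finset (Fin (min m n))) :
    #{i | ξ ≤ D'.s i} * (ξ / 2) ^ 2 ≤ #S * (ξ / 2) ^ 2 + ∑ i ∈ Sᶜ, D.s i ^ 2 := by
  have hξ₀ : 0 ≤ ξ := le_trans (by positivity) hξ
  have h_weyl (i) (hi : ξ ≤ D'.s i) : (ξ / 2) ^ 2 ≤ D.s i ^ 2 := by
    refine pow_le_pow_left₀ (by positivity) ?_ 2
    linarith [D.s_le_s_add_norm_sub D' i]
  set J : Finset (Fin (min m n)) := {i | ξ ≤ D'.s i}
  calc #J * (ξ / 2) ^ 2 = ∑ i ∈ J ∩ S, (ξ / 2) ^ 2 + ∑ i ∈ J \ S, (ξ / 2) ^ 2 := by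
        rw [sum_inter_add_sum_sdiff, sum_const, nsmul_eq_mul]
    _ ≤ ∑ i ∈ S, (ξ / 2) ^ 2 + ∑ i ∈ J \ S, D.s i ^ 2 := by
        refine add_le_add ?_ (sum_le_sum fun i hi => ?_)
        · gcongr
          exact inter_subset_right
        · exact h_weyl i (mem_filter.mp (mem_sdiff.mp hi).1).2
    _ ≤ #S * (ξ / 2) ^ 2 + ∑ i ∈ Sᶜ, D.s i ^ 2 := by
        rw [sum_const, nsmul_eq_mul]
        gcongr
        exact fun i hi => mem_compl.mpr (mem_sdiff.mp hi).2

theorem frobNorm_thresh_sub_sq_le (D' : SVDOf B) {ξ : ℝ} (hξ : 2 * specNorm (B - A) ≤ ξ)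
    (S : Finset (Fin (min m n))) :
    frobNorm (D'.thresh ξ - A) ^ 2 ≤ 5 / 2 * #S * ξ ^ 2 + 2 * ∑ i ∈ Sᶜ, D.s i ^ 2 := by
  rw [specNorm_eq_l2_opNorm] at hξ
  have hξ₀ : 0 ≤ ξ := le_trans (by positivity) hξ
  set J : Finset (Fin (min m n)) := {i | ξ ≤ D'.s i}
  set P := D'.rightProj J
  have hP : IsStarProjection P := D'.isStarProjection_rightProj J
  have hAP : ‖A * (1 - P)‖ ≤ 3 / 2 * ξ := by
    have hBP : ‖B * (1 - P)‖ ≤ ξ :=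
      D'.norm_mul_one_sub_rightProj_le hξ₀ fun i hi => le_of_lt (by simpa [J] using hi)
    linarith [l2_opNorm_mul_one_sub_le_of_isStarProjection hP A B]
  calc frobNorm (D'.thresh ξ - A) ^ 2
      = frobNorm ((B - A) * P) ^ 2 + frobNorm (A * (1 - P)) ^ 2 := by
        rw [thresh_eq_mul_rightProj, frobNorm_mul_sub_sq_of_isStarProjection hP]
    _ ≤ #J * ‖B - A‖ ^ 2 +
          (#S * ‖A * (1 - P)‖ ^ 2 + (∑ i ∈ Sᶜ, D.s i ^ 2) * ‖1 - P‖ ^ 2) := by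
        grw [D'.frobNorm_mul_rightProj_sq_le, D.frobNorm_mul_sq_le _ S]
    _ ≤ #J * (ξ / 2) ^ 2 + (#S * (3 / 2 * ξ) ^ 2 + (∑ i ∈ Sᶜ, D.s i ^ 2) * 1 ^ 2) := by
        gcongr
        · linarith
        · exact IsStarProjection.norm_le _ hP.one_sub
    _ ≤ 5 / 2 * #S * ξ ^ 2 + 2 * ∑ i ∈ Sᶜ, D.s i ^ 2 := by
        linarith [D.card_le_s_mul_sq_le D' hξ S]

theorem sum_s_sq_filter_le_and_lt_rank (k : ℕ) :
    ∑ i ∈ {i : Fin (min m n) | k ≤ (i : ℕ) ∧ (i : ℕ) < A.rank}, D.s i ^ 2 =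
      ∑ i ∈ {i : Fin (min m n) | k ≤ (i : ℕ)}, D.s i ^ 2 := by
  refine sum_subset (monotone_filter_right _ fun i _ => And.left) fun i hk hi => ?_
  have h_rank : A.rank ≤ i := by simp_all
  rw [D.s_eq_zero_of_rank_le h_rank, zero_pow two_ne_zero]

end SVDOf

/-- Rank-adaptive bound for singular value thresholding:
`‖Ĥ(ξ) − H‖_F² ≤ 18 min_k (4kξ² + Σ_{i>k} s_i(H)²)` whenever `ξ ≥ 2‖Z‖₂`. -/
theorem stmt5 {m n : ℕ} (H Z : Matrix (Fin m) (Fin n) ℝ) (n₀ : ℕ)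
    (hrank : H.rank = n₀) (DH : SVDOf H) (DHhat : SVDOf (H + Z))
    (ξ : ℝ) (hξ : 2 * specNorm Z ≤ ξ) :
    frobNorm (DHhat.thresh ξ - H) ^ 2 ≤
      18 * (Finset.range (n₀ + 1)).inf'
        (Finset.nonempty_range_iff.mpr (Nat.succ_ne_zero n₀))
        (fun k => 4 * (k : ℝ) * ξ ^ 2 +
          ∑ i ∈ Finset.univ.filter
            (fun i : Fin (min m n) => k ≤ (i : ℕ) ∧ (i : ℕ) < n₀), DH.s i ^ 2) := by
  subst hrank
  rw [mul_comm, ← div_le_iff₀ (by norm_num), le_inf'_iff]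
  intro k _
  rw [div_le_iff₀' (by norm_num), DH.sum_s_sq_filter_le_and_lt_rank]
  set S : Finset (Fin (min m n)) := {i | (i : ℕ) < k}
  have hS : Sᶜ = ({i | k ≤ (i : ℕ)} : Finset (Fin (min m n))) := by
    ext i
    simp [S]
  have h_card : (#S : ℝ) ≤ k := by
    exact_mod_cast Fin.card_filter_val_lt.trans_le (min_le_right _ _)
  have h_tail : 0 ≤ ∑ i ∈ Sᶜ, DH.s i ^ 2 := by positivity
  calc frobNorm (DHhat.thresh ξ - H) ^ 2
      ≤ 5 / 2 * #S * ξ ^ 2 + 2 * ∑ i ∈ Sᶜ, DH.s i ^ 2 :=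
        DH.frobNorm_thresh_sub_sq_le DHhat (by rwa [add_sub_cancel_left]) S
    _ ≤ 18 * (4 * k * ξ ^ 2 + ∑ i ∈ Sᶜ, DH.s i ^ 2) := by
        grw [h_card]
        linarith [show 0 ≤ k * ξ ^ 2 by positivity]
    _ = _ := by rw [hS]
end
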